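/- Let m, n, r, s be natural numbers with m, n ≥ 1 satisfying the metacyclic conditions s^n ≡ 1 (mod m) and r·s ≡ r (mod m), and let ε, τ ∈ {0,1}. Let Ĝ be the presented group on three generators x, y, i with relators x^m·i^{−1}, y^n·x^{−r}·i^{−ε}, y^{−1}·x·y·x^{−s}·i^{−τ}, i², i^{−1}·x^{−1}·i·x, and i^{−1}·y^{−1}·i·y (i.e., the group P_{(i, i^ε, i^τ)} = ⟨x, y, i ∣ x^m = i, y^n = x^r i^ε, x^y = x^s i^τ, i² = 1, i central⟩). Then Nat.card Ĝ = 2·m·n (i.e., P_{(i,i^ε,i^τ)} is a double covering of M(m,n,r,s)) if and only if (s + m·τ)^n ≡ 1 (mod 2m) and (r + m·ε)·(s + m·τ) ≡ r + m·ε (mod 2m); and in that case Ĝ is isomorphic to the metacyclic group M(2m, n, r + m·ε, s + m·τ) = ⟨x, y ∣ x^{2m} = 1, y^n = x^{r+mε}, x^y = x^{s+mτ}⟩. -/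

import Mathlib

/-- Relators of the presentation `P_{(i, i^ε, i^τ)} = ⟨x, y, i ∣ x^m = i, y^n = x^r i^ε,
x^y = x^s i^τ, i² = 1, [i,x] = 1, [i,y] = 1⟩`, on generators `x = of 0`, `y = of 1`,
`i = of 2` of the free group on `Fin 3`. -/
def relsPiετ (m n r s ε τ : ℕ) : Set (FreeGroup (Fin 3)) :=
  { FreeGroup.of 0 ^ m * (FreeGroup.of 2)⁻¹,
    FreeGroup.of 1 ^ n * (FreeGroup.of 0 ^ r * FreeGroup.of 2 ^ ε)⁻¹,
    (FreeGroup.of 1)⁻¹ * FreeGroup.of 0 * FreeGroup.of 1 *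
      (FreeGroup.of 0 ^ s * FreeGroup.of 2 ^ τ)⁻¹,
    FreeGroup.of 2 ^ 2,
    (FreeGroup.of 2)⁻¹ * (FreeGroup.of 0)⁻¹ * FreeGroup.of 2 * FreeGroup.of 0,
    (FreeGroup.of 2)⁻¹ * (FreeGroup.of 1)⁻¹ * FreeGroup.of 2 * FreeGroup.of 1 }

/-- Relators of the metacyclic presentation `M(m,n,r,s) = ⟨x, y ∣ x^m = 1, y^n = x^r,
x^y = x^s⟩`, on generators `x = of 0`, `y = of 1` of the free group on `Fin 2`. -/
def metacyclicRels (m n r s : ℕ) : Set (FreeGroup (Fin 2)) :=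
  { FreeGroup.of 0 ^ m,
    FreeGroup.of 1 ^ n * (FreeGroup.of 0 ^ r)⁻¹,
    (FreeGroup.of 1)⁻¹ * FreeGroup.of 0 * FreeGroup.of 1 * (FreeGroup.of 0 ^ s)⁻¹ }

open PresentedGroup in
lemma P_lift {H : Type*} [Group H] (m n r s ε τ : ℕ) (x y : H)
    (h1 : x ^ (2 * m) = 1) (h2 : y ^ n = x ^ (r + m * ε))
    (h3 : y⁻¹ * x * y = x ^ (s + m * τ)) (hodd : (s + m * τ) % 2 = 1) :
    ∃ f : PresentedGroup (relsPiετ m n r s ε τ) →* H,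
      f (.of 0) = x ∧ f (.of 1) = y ∧ f (.of 2) = x ^ m := by
  have hc : y⁻¹ * x ^ m * y = x ^ m := by
    have h4 := conj_pow (i := m) (a := y⁻¹) (b := x)
    rw [inv_inv, h3] at h4
    rw [← h4, ← pow_mul]
    obtain ⟨k, hk⟩ : ∃ k, s + m * τ = 2 * k + 1 := ⟨(s + m * τ) / 2, by omega⟩
    rw [hk, show (2 * k + 1) * m = (2 * m) * k + m by ring, pow_add, pow_mul, h1]
    simp
  have key : ∀ w ∈ relsPiετ m n r s ε τ, FreeGroup.lift ![x, y, x ^ m] w = 1 := by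
    intro w hw
    simp only [relsPiετ, Set.mem_insert_iff, Set.mem_singleton_iff] at hw
    rcases hw with rfl | rfl | rfl | rfl | rfl | rfl
    · simp
    · simp only [map_mul, map_inv, map_pow, FreeGroup.lift_apply_of]
      simp only [Matrix.cons_val]
      rw [mul_inv_eq_one, h2, pow_add, pow_mul]
    · simp only [map_mul, map_inv, map_pow, FreeGroup.lift_apply_of]
      simp only [Matrix.cons_val]
      rw [mul_inv_eq_one, h3, pow_add, pow_mul]
    · simp only [map_mul, map_inv, map_pow, FreeGroup.lift_apply_of]
      simp only [Matrix.cons_val]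
      rw [← pow_mul, mul_comm, h1]
    · simp only [map_mul, map_inv, map_pow, FreeGroup.lift_apply_of]
      simp only [Matrix.cons_val]
      group
    · simp only [map_mul, map_inv, map_pow, FreeGroup.lift_apply_of]
      simp only [Matrix.cons_val]
      rw [mul_assoc, mul_assoc, ← mul_assoc y⁻¹, hc]
      simp
  refine ⟨PresentedGroup.toGroup key, ?_, ?_, ?_⟩ <;> simp [PresentedGroup.toGroup.of]

lemma P_rels_aux {H : Type*} [Group H] (m n r s ε τ : ℕ) (φ : FreeGroup (Fin 3) →* H)
    (h : ∀ w ∈ relsPiετ m n r s ε τ, φ w = 1) :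
    φ (.of 2) = φ (.of 0) ^ m ∧ φ (.of 0) ^ (2 * m) = 1 ∧
    φ (.of 1) ^ n = φ (.of 0) ^ (r + m * ε) ∧
    (φ (.of 1))⁻¹ * φ (.of 0) * φ (.of 1) = φ (.of 0) ^ (s + m * τ) := by
  simp only [relsPiετ, Set.mem_insert_iff, Set.mem_singleton_iff, forall_eq_or_imp, forall_eq,
    map_mul, map_inv, map_pow] at h
  obtain ⟨a1, a2, a3, a4, -, -⟩ := h
  rw [mul_inv_eq_one] at a1 a2 a3
  refine ⟨a1.symm, ?_, ?_, ?_⟩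
  · rw [mul_comm, pow_mul, a1, a4]
  · rw [a2, ← a1, pow_add, pow_mul]
  · rw [a3, ← a1, pow_add, pow_mul]

lemma P_rels (m n r s ε τ : ℕ) :
    (PresentedGroup.of 2 : PresentedGroup (relsPiετ m n r s ε τ)) = .of 0 ^ m ∧
    (PresentedGroup.of 0 : PresentedGroup (relsPiετ m n r s ε τ)) ^ (2 * m) = 1 ∧
    (PresentedGroup.of 1 : PresentedGroup (relsPiετ m n r s ε τ)) ^ n = .of 0 ^ (r + m * ε) ∧
    (PresentedGroup.of 1 : PresentedGroup (relsPiετ m n r s ε τ))⁻¹ * .of 0 * .of 1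
      = .of 0 ^ (s + m * τ) := by
  exact P_rels_aux m n r s ε τ (PresentedGroup.mk (relsPiετ m n r s ε τ))
    fun w hw => PresentedGroup.one_of_mem hw

lemma M_rels_aux {H : Type*} [Group H] (M n R S : ℕ) (φ : FreeGroup (Fin 2) →* H)
    (h : ∀ w ∈ metacyclicRels M n R S, φ w = 1) :
    φ (.of 0) ^ M = 1 ∧ φ (.of 1) ^ n = φ (.of 0) ^ R ∧
    (φ (.of 1))⁻¹ * φ (.of 0) * φ (.of 1) = φ (.of 0) ^ S := by
  simp only [metacyclicRels, Set.mem_insert_iff, Set.mem_singleton_iff, forall_eq_or_imp,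
    forall_eq, map_mul, map_inv, map_pow] at h
  obtain ⟨a1, a2, a3⟩ := h
  rw [mul_inv_eq_one] at a2 a3
  exact ⟨a1, a2, a3⟩

lemma M_rels (M n R S : ℕ) :
    (PresentedGroup.of 0 : PresentedGroup (metacyclicRels M n R S)) ^ M = 1 ∧
    (PresentedGroup.of 1 : PresentedGroup (metacyclicRels M n R S)) ^ n = .of 0 ^ R ∧
    (PresentedGroup.of 1 : PresentedGroup (metacyclicRels M n R S))⁻¹ * .of 0 * .of 1
      = .of 0 ^ S := by
  exact M_rels_aux M n R S (PresentedGroup.mk (metacyclicRels M n R S))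
    fun w hw => PresentedGroup.one_of_mem hw

lemma conj_pow_iter {G : Type*} [Group G] {S : ℕ} {x y : G} (h3 : y⁻¹ * x * y = x ^ S) (j : ℕ) :
    x * y ^ j = y ^ j * x ^ (S ^ j) := by
  have h3' : ∀ a : ℕ, x ^ a * y = y * x ^ (S * a) := by
    intro a
    have h4 := conj_pow (i := a) (a := y⁻¹) (b := x)
    rw [inv_inv, h3, ← pow_mul] at h4
    rw [h4]; group
  induction j with
  | zero => simp
  | succ j ih =>
    rw [pow_succ, ← mul_assoc, ih, mul_assoc, h3', ← mul_assoc, pow_succ, mul_comm S]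

lemma normal_form {G : Type*} [Group G] {M n R S : ℕ} (hM : 1 ≤ M) (hn : 1 ≤ n) {x y : G}
    (hgen : Subgroup.closure {x, y} = ⊤)
    (h1 : x ^ M = 1) (h2 : y ^ n = x ^ R) (h3 : y⁻¹ * x * y = x ^ S) (g : G) :
    ∃ j < n, ∃ a < orderOf x, g = y ^ j * x ^ a := by
  have hfin : 0 < orderOf x := orderOf_pos_iff.2 (isOfFinOrder_iff_pow_eq_one.2 ⟨M, hM, h1⟩)
  have hy1 : y ^ (n * M) = 1 := by rw [pow_mul, h2, ← pow_mul, mul_comm, pow_mul, h1, one_pow]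
  have hxinv : x⁻¹ = x ^ (M - 1) := by
    rw [inv_eq_iff_mul_eq_one, ← pow_succ', Nat.sub_add_cancel hM, h1]
  have hyinv : y⁻¹ = y ^ (n * M - 1) := by
    rw [inv_eq_iff_mul_eq_one, ← pow_succ', Nat.sub_add_cancel (Nat.mul_pos hn hM), hy1]
  have hx' : ∀ b j a : ℕ, ∃ j' a' : ℕ, x ^ b * (y ^ j * x ^ a) = y ^ j' * x ^ a' := by
    intro b
    induction b with
    | zero => intro j a; exact ⟨j, a, by simp⟩
    | succ b ih =>
      intro j a
      obtain ⟨j', a', h⟩ := ih j (S ^ j + a)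
      refine ⟨j', a', ?_⟩
      rw [← h, pow_succ, mul_assoc, ← mul_assoc x, conj_pow_iter h3, mul_assoc, ← pow_add]
  have hy' : ∀ b j a : ℕ, ∃ j' a' : ℕ, y ^ b * (y ^ j * x ^ a) = y ^ j' * x ^ a' := by
    intro b j a
    exact ⟨b + j, a, by rw [pow_add, mul_assoc]⟩
  have main : ∃ j a : ℕ, g = y ^ j * x ^ a := by
    have hg : g ∈ Subgroup.closure {x, y} := by rw [hgen]; trivial
    induction hg using Subgroup.closure_induction_left with
    | one => exact ⟨0, 0, by simp⟩
    | mul_left u hu v _ ih =>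
      obtain ⟨j, a, rfl⟩ := ih
      rcases hu with rfl | rfl
      · simpa using hx' 1 j a
      · simpa using hy' 1 j a
    | inv_mul_cancel u hu v _ ih =>
      obtain ⟨j, a, rfl⟩ := ih
      rcases hu with rfl | rfl
      · rw [hxinv]; exact hx' _ j a
      · rw [hyinv]; exact hy' _ j a
  obtain ⟨j, a, rfl⟩ := main
  refine ⟨j % n, Nat.mod_lt _ hn, (R * (j / n) + a) % orderOf x, Nat.mod_lt _ hfin, ?_⟩
  rw [pow_mod_orderOf, pow_add, pow_mul, ← h2, ← mul_assoc, ← pow_mul, ← pow_add, Nat.mod_add_div]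

lemma P_gen (m n r s ε τ : ℕ) : Subgroup.closure
    {(.of 0 : PresentedGroup (relsPiετ m n r s ε τ)), .of 1} = ⊤ := by
  rw [eq_top_iff, ← PresentedGroup.closure_range_of, Subgroup.closure_le]
  rintro _ ⟨a, rfl⟩
  have h0 : (.of 0 : PresentedGroup (relsPiετ m n r s ε τ)) ∈ Subgroup.closure
    {(.of 0 : PresentedGroup (relsPiετ m n r s ε τ)), .of 1} :=
    Subgroup.subset_closure (by simp)
  fin_cases a
  · exact h0
  · exact Subgroup.subset_closure (by simp)
  · show PresentedGroup.of 2 ∈ _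
    rw [(P_rels m n r s ε τ).1]
    exact Subgroup.pow_mem _ h0 _

/-- A model in which `x` has order `M`. -/
lemma model (M n R S : ℕ) (hM : 1 ≤ M) (hn : 1 ≤ n) (hS : S ^ n ≡ 1 [MOD M])
    (hR : R * S ≡ R [MOD M]) :
    ∃ (Q : Type) (_ : Group Q) (x y : Q), orderOf x = M ∧ y ^ n = x ^ R ∧
      y⁻¹ * x * y = x ^ S := by
  let C := Multiplicative (ZMod M)
  let x : C := Multiplicative.ofAdd 1
  have hC : ∀ (c : C) (a b : ℕ), a ≡ b [MOD M] → c ^ a = c ^ b := by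
    intro c a b h
    apply Multiplicative.toAdd.injective
    rw [toAdd_pow, toAdd_pow, nsmul_eq_mul, nsmul_eq_mul, (ZMod.natCast_eq_natCast_iff _ _ _).2 h]
  have hxo : orderOf x = M := by
    rw [orderOf_ofAdd_eq_addOrderOf]; exact ZMod.addOrderOf_one M
  obtain ⟨k, rfl⟩ : ∃ k, n = k + 1 := ⟨n - 1, by omega⟩
  let g : MulAut C :=
    { toFun := fun c => c ^ (S ^ k)
      invFun := fun c => c ^ S
      left_inv := fun c => by
        show (c ^ (S ^ k)) ^ S = c
        rw [← pow_mul, ← pow_succ, hC c _ _ hS, pow_one]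
      right_inv := fun c => by
        show (c ^ S) ^ (S ^ k) = c
        rw [← pow_mul, ← pow_succ', hC c _ _ hS, pow_one]
      map_mul' := fun a b => mul_pow _ _ _ }
  have hg : ∀ c, g c = c ^ (S ^ k) := fun _ => rfl
  have hgi : ∀ c, g⁻¹ c = c ^ S := fun _ => rfl
  have hgpow : ∀ (j : ℕ) (c : C), (g⁻¹ ^ j) c = c ^ (S ^ j) := by
    intro j
    induction j with
    | zero => intro c; simp
    | succ j ih => intro c; rw [pow_succ, MulAut.mul_apply, ih, hgi, ← pow_mul, pow_succ']
  have hgn : g ^ (k + 1) = 1 := by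
    rw [← inv_inj, inv_one, ← inv_pow]
    ext c
    rw [hgpow, hC c _ _ hS]; simp
  let φ : Multiplicative ℤ →* MulAut C := zpowersHom _ g
  have hφ : φ (Multiplicative.ofAdd 1) = g := by simp [φ]
  let E := C ⋊[φ] Multiplicative ℤ
  let X : E := SemidirectProduct.inl x
  let Y : E := SemidirectProduct.inr (Multiplicative.ofAdd 1)
  have hYX : ∀ c : C, Y * SemidirectProduct.inl c * Y⁻¹ = SemidirectProduct.inl (g c) := by
    intro c
    rw [← hφ, SemidirectProduct.inl_aut]; simp [Y]
  have hYXn : ∀ c : C, Y ^ (k + 1) * SemidirectProduct.inl c = SemidirectProduct.inl c * Y ^ (k + 1) := by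
    intro c
    have h := SemidirectProduct.inl_aut (φ := φ) (Multiplicative.ofAdd 1 ^ (k + 1)) c
    rw [map_pow, hφ, hgn] at h
    simp only [MulAut.one_apply, ← map_inv] at h
    rw [map_inv, map_pow] at h
    rw [eq_mul_inv_iff_mul_eq] at h
    exact h.symm
  have hgR : g (x ^ R) = x ^ R := by
    apply g⁻¹.injective
    rw [MulAut.inv_apply_self, hgi, ← pow_mul, hC x _ _ hR]
  let z : E := (SemidirectProduct.inl (x ^ R))⁻¹ * Y ^ (k + 1)
  have hYz : Y * SemidirectProduct.inl (x ^ R) = SemidirectProduct.inl (x ^ R) * Y := by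
    rw [← mul_inv_eq_iff_eq_mul, hYX, hgR]
  have hz : z ∈ Subgroup.center E := by
    rw [Subgroup.mem_center_iff]
    have hYc : Commute Y z :=
      Commute.mul_right (Commute.inv_right hYz) (Commute.pow_right rfl _)
    intro w
    rw [← SemidirectProduct.inl_left_mul_inr_right w]
    apply Commute.eq
    apply Commute.mul_left
    · apply Commute.mul_right
      · apply Commute.inv_right
        show _ * _ = _ * _
        rw [← map_mul, ← map_mul, mul_comm]
      · exact (hYXn _).symm
    · have : (SemidirectProduct.inr w.right : E) = Y ^ (Multiplicative.toAdd w.right) := by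
        simp only [Y, ← map_zpow]
        congr 1
        apply Multiplicative.toAdd.injective
        simp
      rw [this]
      exact hYc.zpow_left _
  let Z : Subgroup E := Subgroup.zpowers z
  haveI : Z.Normal := by
    constructor
    intro a ha w
    have : a ∈ Subgroup.center E := (Subgroup.zpowers_le.2 hz) ha
    rw [Subgroup.mem_center_iff] at this
    rwa [this w, mul_inv_cancel_right]
  refine ⟨E ⧸ Z, inferInstance, (X : E ⧸ Z), (Y : E ⧸ Z), ?_, ?_, ?_⟩
  · have : ∀ j : ℕ, (X : E ⧸ Z) ^ j = 1 ↔ x ^ j = 1 := by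
      intro j
      rw [← QuotientGroup.mk_pow, QuotientGroup.eq_one_iff]
      constructor
      · intro h
        obtain ⟨t, ht⟩ := Subgroup.mem_zpowers_iff.1 h
        have h2 := congrArg (SemidirectProduct.rightHom) ht
        simp only [z, X, Y, map_zpow, map_mul, map_inv, map_pow, SemidirectProduct.rightHom_inl,
          SemidirectProduct.rightHom_inr] at h2
        have h3 := congrArg Multiplicative.toAdd h2
        simp at h3
        have h4 : t = 0 := by
          rcases h3 with h | h
          · exact h
          · omega
        subst h4
        rw [zpow_zero] at ht
        apply SemidirectProduct.inl_injective (φ := φ)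
        rw [map_pow, map_one]
        exact ht.symm
      · intro h
        have : X ^ j = 1 := by simp only [X]; rw [← map_pow, h, map_one]
        rw [this]; exact Z.one_mem
    refine Eq.trans ?_ hxo
    apply Nat.dvd_antisymm
    · rw [orderOf_dvd_iff_pow_eq_one, this, pow_orderOf_eq_one]
    · rw [orderOf_dvd_iff_pow_eq_one, ← this, pow_orderOf_eq_one]
  · rw [← QuotientGroup.mk_pow, ← QuotientGroup.mk_pow, eq_comm, QuotientGroup.eq]
    have : (X ^ R)⁻¹ * Y ^ (k + 1) = z := by simp only [z, X]; rw [map_pow]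
    rw [this]
    exact Subgroup.mem_zpowers z
  · rw [← QuotientGroup.mk_pow, ← QuotientGroup.mk_inv, ← QuotientGroup.mk_mul,
      ← QuotientGroup.mk_mul]
    congr 1
    have h := hYX (x ^ S)
    have : g (x ^ S) = x := by
      rw [← hgi]; exact MulAut.apply_inv_self _ _ _
    rw [this] at h
    show Y⁻¹ * SemidirectProduct.inl x * Y = X ^ S
    rw [← h, map_pow, mul_assoc, mul_assoc, inv_mul_cancel, mul_one, inv_mul_cancel_left]

theorem stmt_16 (m n r s ε τ : ℕ) (hm : 1 ≤ m) (hn : 1 ≤ n)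
    (hmc1 : s ^ n ≡ 1 [MOD m]) (hmc2 : r * s ≡ r [MOD m])
    (hε : ε = 0 ∨ ε = 1) (hτ : τ = 0 ∨ τ = 1) :
    (Nat.card (PresentedGroup (relsPiετ m n r s ε τ)) = 2 * m * n ↔
      ((s + m * τ) ^ n ≡ 1 [MOD 2 * m] ∧
        (r + m * ε) * (s + m * τ) ≡ r + m * ε [MOD 2 * m])) ∧
    (((s + m * τ) ^ n ≡ 1 [MOD 2 * m] ∧
        (r + m * ε) * (s + m * τ) ≡ r + m * ε [MOD 2 * m]) →
      Nonempty (PresentedGroup (relsPiετ m n r s ε τ) ≃*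
        PresentedGroup (metacyclicRels (2 * m) n (r + m * ε) (s + m * τ)))) := by
  obtain ⟨hi, h1, h2, h3⟩ := P_rels m n r s ε τ
  have hodd : (s + m * τ) ^ n ≡ 1 [MOD 2 * m] → (s + m * τ) % 2 = 1 := by
    intro h
    have h' : (s + m * τ) ^ n ≡ 1 [MOD 2] := h.of_mul_right m
    rcases Nat.mod_two_eq_zero_or_one (s + m * τ) with h0 | h0
    · have : (s + m * τ) ^ n ≡ 0 ^ n [MOD 2] := Nat.ModEq.pow n h0
      rw [zero_pow (by omega)] at this
      exact absurd (this.symm.trans h') (by decide)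
    · exact h0
  have nf := normal_form (M := 2 * m) (by omega) hn (P_gen m n r s ε τ) h1 h2 h3
  have surj : Function.Surjective (fun p : Fin n ×
      Fin (orderOf (.of 0 : PresentedGroup (relsPiετ m n r s ε τ))) =>
      (.of 1 : PresentedGroup (relsPiετ m n r s ε τ)) ^ (p.1 : ℕ) * .of 0 ^ (p.2 : ℕ)) := by
    intro g
    obtain ⟨j, hj, a, ha, rfl⟩ := nf g
    exact ⟨(⟨j, hj⟩, ⟨a, ha⟩), rfl⟩
  refine ⟨⟨?_, ?_⟩, ?_⟩
  · intro hcard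
    have hle := Nat.card_le_card_of_surjective _ surj
    rw [hcard] at hle
    rw [Nat.card_prod, Nat.card_fin, Nat.card_fin] at hle
    have hdvd := orderOf_dvd_of_pow_eq_one h1
    have hord : orderOf (.of 0 : PresentedGroup (relsPiετ m n r s ε τ)) = 2 * m := by
      apply le_antisymm (Nat.le_of_dvd (by omega) hdvd)
      rw [mul_comm n] at hle
      exact Nat.le_of_mul_le_mul_right hle hn
    rw [← hord]
    constructor
    · rw [← pow_eq_pow_iff_modEq, pow_one]
      have h := conj_pow_iter h3 n
      have hc : (.of 0 : PresentedGroup (relsPiετ m n r s ε τ)) * .of 1 ^ n = .of 1 ^ n * .of 0 := by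
        rw [h2, ← pow_succ, ← pow_succ']
      rw [hc] at h
      exact (mul_left_cancel h).symm
    · rw [← pow_eq_pow_iff_modEq]
      have h4 := conj_pow (i := r + m * ε)
        (a := (.of 1 : PresentedGroup (relsPiετ m n r s ε τ))⁻¹) (b := .of 0)
      rw [inv_inv, h3, ← pow_mul, mul_comm] at h4
      rw [h4, ← h2]
      group
  · rintro ⟨hS, hR⟩
    obtain ⟨Q, _, x, y, hx, q2, q3⟩ := model (2 * m) n _ _ (by omega) hn hS hR
    obtain ⟨f, f0, -, -⟩ := P_lift m n r s ε τ x y (by rw [← hx, pow_orderOf_eq_one]) q2 q3 (hodd hS)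
    have hord : orderOf (.of 0 : PresentedGroup (relsPiετ m n r s ε τ)) = 2 * m := by
      apply Nat.dvd_antisymm (orderOf_dvd_of_pow_eq_one h1)
      rw [← hx, ← f0]
      exact orderOf_map_dvd f _
    obtain ⟨g, g0, g1, -⟩ := P_lift m n r s ε τ (1 : Multiplicative (ZMod n))
      (Multiplicative.ofAdd 1) (by simp)
      (by rw [← ofAdd_nsmul]; simp) (by simp) (hodd hS)
    have inj : Function.Injective (fun p : Fin n ×
        Fin (orderOf (.of 0 : PresentedGroup (relsPiετ m n r s ε τ))) =>
        (.of 1 : PresentedGroup (relsPiετ m n r s ε τ)) ^ (p.1 : ℕ) * .of 0 ^ (p.2 : ℕ)) := by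
      rintro ⟨j, a⟩ ⟨j', a'⟩ h
      simp only at h
      have hg := congrArg g h
      simp only [map_mul, map_pow, g0, g1, one_pow, mul_one, ← ofAdd_nsmul] at hg
      have hg' := Multiplicative.ofAdd.injective hg
      rw [nsmul_eq_mul, nsmul_eq_mul, mul_one, mul_one, ZMod.natCast_eq_natCast_iff] at hg'
      have hj : j = j' := Fin.ext (Nat.ModEq.eq_of_lt_of_lt hg' j.2 j'.2)
      subst hj
      have ha := mul_left_cancel h
      rw [pow_eq_pow_iff_modEq] at ha
      have : a = a' := Fin.ext (Nat.ModEq.eq_of_lt_of_lt ha a.2 a'.2)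
      rw [this]
    rw [← Nat.card_congr (Equiv.ofBijective _ ⟨inj, surj⟩)]
    rw [Nat.card_prod, Nat.card_fin, Nat.card_fin]
    rw [hord, mul_comm]
  · rintro ⟨hS, hR⟩
    obtain ⟨q1, q2, q3⟩ := M_rels (2 * m) n (r + m * ε) (s + m * τ)
    obtain ⟨f, f0, f1, f2⟩ := P_lift m n r s ε τ _ _ q1 q2 q3 (hodd hS)
    have key : ∀ w ∈ metacyclicRels (2 * m) n (r + m * ε) (s + m * τ), FreeGroup.lift
        ![(.of 0 : PresentedGroup (relsPiετ m n r s ε τ)), .of 1] w = 1 := by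
      intro w hw
      simp only [metacyclicRels, Set.mem_insert_iff, Set.mem_singleton_iff] at hw
      rcases hw with rfl | rfl | rfl
      · simpa using h1
      · simp only [map_mul, map_inv, map_pow, FreeGroup.lift_apply_of]
        simp only [Matrix.cons_val]
        rw [mul_inv_eq_one, h2]
      · simp only [map_mul, map_inv, map_pow, FreeGroup.lift_apply_of]
        simp only [Matrix.cons_val]
        rw [mul_inv_eq_one, h3]
    have g0 : PresentedGroup.toGroup key (.of 0) = .of 0 := by simp [PresentedGroup.toGroup.of]
    have g1 : PresentedGroup.toGroup key (.of 1) = .of 1 := by simp [PresentedGroup.toGroup.of]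
    refine ⟨MonoidHom.toMulEquiv f (PresentedGroup.toGroup key) ?_ ?_⟩
    · apply PresentedGroup.ext
      intro a
      fin_cases a
      · show PresentedGroup.toGroup key (f (.of 0)) = .of 0
        rw [f0, g0]
      · show PresentedGroup.toGroup key (f (.of 1)) = .of 1
        rw [f1, g1]
      · show PresentedGroup.toGroup key (f (.of 2)) = .of 2
        rw [f2, map_pow, g0, hi]
    · apply PresentedGroup.ext
      intro a
      fin_cases a
      · show f (PresentedGroup.toGroup key (.of 0)) = .of 0
        rw [g0, f0]
      · show f (PresentedGroup.toGroup key (.of 1)) = .of 1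
        rw [g1, f1]
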